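/- Let M = 2m-1 with m a positive integer, and let q ≥ (m + √(m²+4m))/2. Then for all j with 1 ≤ j ≤ M-1, the right endpoint (j-1)/q + M/(q²-q) of the j-th switch interval is strictly less than the left endpoint (j+1)/q of the (j+1)-st switch interval; that is, the switch intervals [j/q, (j-1)/q + M/(q²-q)] for j = 1,...,M are pairwise disjoint. -/

import Mathlib

/-!
The gap between the right endpoint `η_j = (j - 1) / q + M / (q² - q)` and the left endpoint
`θ_{j+1} = (j + 1) / q` does not depend on `j`: it equals `2 (q - (1 + M / 2)) / (q (q - 1))`.
So for `q > 1` the endpoints are in the right order exactly when `q > 1 + M / 2`. For `M = 2m - 1`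
this threshold is `m + 1 / 2`, which lies below the generalized Golden Ratio because
`(m + 1)² < m² + 4m` as soon as `m > 1 / 2`.
-/

/-- The generalized Golden Ratio of the alphabet `{0, ..., 2m - 1}`, the positive root of
`q² = m q + m`; it is the least base considered for that alphabet. The parameter `m` is real, so
that no casts intervene. -/
noncomputable def oddGoldenRatio (m : ℝ) : ℝ := (m + √(m ^ 2 + 4 * m)) / 2

lemma add_half_lt_oddGoldenRatio {m : ℝ} (hm : 1 / 2 < m) : m + 1 / 2 < oddGoldenRatio m := by
  have hsqrt : m + 1 < √(m ^ 2 + 4 * m) := Real.lt_sqrt_of_sq_lt (by linarith)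
  unfold oddGoldenRatio
  linarith

lemma one_add_half_lt_of_oddGoldenRatio_le {m M : ℕ} (hm : 0 < m) (hM : M = 2 * m - 1) {q : ℝ}
    (hq : oddGoldenRatio m ≤ q) : 1 + (M : ℝ) / 2 < q := by
  have hm_one : (1 : ℝ) ≤ m := by exact_mod_cast hm
  have hM_add_one : (M : ℝ) + 1 = 2 * m := by exact_mod_cast (by omega : M + 1 = 2 * m)
  calc 1 + (M : ℝ) / 2 = m + 1 / 2 := by linarith
    _ < oddGoldenRatio m := add_half_lt_oddGoldenRatio (by linarith)
    _ ≤ q := hq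

section OrderedField

variable {K : Type*} [Field K]

lemma switch_gap_eq [NeZero (2 : K)] {q : K} (hq₀ : q ≠ 0) (hq₁ : q - 1 ≠ 0) (M j : K) :
    (j + 1) / q - ((j - 1) / q + M / (q ^ 2 - q)) = 2 * (q - (1 + M / 2)) / (q * (q - 1)) := by
  rw [show q ^ 2 - q = q * (q - 1) by ring]
  field_simp
  ring

theorem stmt5_general [LinearOrder K] [IsStrictOrderedRing K] {q : K} (hq : 1 < q) (M j : K) :
    (j - 1) / q + M / (q ^ 2 - q) < (j + 1) / q ↔ 1 + M / 2 < q := by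
  have hq₀ : 0 < q := one_pos.trans hq
  have hq₁ : 0 < q - 1 := sub_pos.2 hq
  rw [← sub_pos, switch_gap_eq hq₀.ne' hq₁.ne', div_pos_iff_of_pos_right (mul_pos hq₀ hq₁),
    mul_pos_iff_of_pos_left two_pos, sub_pos]

end OrderedField

theorem stmt5 (m : ℕ) (hm : 0 < m) (M : ℕ) (hM : M = 2 * m - 1)
    (q : ℝ) (hq : ((m : ℝ) + Real.sqrt (m ^ 2 + 4 * m)) / 2 ≤ q)
    (j : ℕ) (hj1 : 1 ≤ j) (hj2 : j ≤ M - 1) :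
    ((j : ℝ) - 1) / q + M / (q ^ 2 - q) < ((j : ℝ) + 1) / q := by
  have hMq : 1 + (M : ℝ) / 2 < q := one_add_half_lt_of_oddGoldenRatio_le hm hM hq
  exact (stmt5_general (by linarith [M.cast_nonneg (α := ℝ)]) _ _).2 hMq
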